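/- Let q ∈ ℂ with 0.2078750206 ≤ |q| ≤ 1/2 and let s ∈ ℕ, s ≥ 1, be such that the circle C(μ_s, 1/4) about μ_s := -q^{-s} of radius 1/4 is contained in {x ∈ ℂ : |x| > 8^11}. Then at every point x of this circle one has |Θ*(q,x)| > 1 > |G(q,x)|, where Θ*(q,x) := Σ_{j=-∞}^{∞} q^{j(j+1)/2} x^j and G(q,x) := Σ_{j=-∞}^{-1} q^{j(j+1)/2} x^j; consequently, by Rouché's theorem, the partial theta function θ(q,·) = Θ*(q,·) - G(q,·) has exactly one zero, a simple one, in the open disk D(μ_s, 1/4). -/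

import Mathlib

/-!
Jacobi's triple product writes `Θ*(q, x)` as `(q; q)_∞ (-xq; q)_∞ (-1/x; q)_∞`, and the
quasi-periodicity `Θ*(q, x) = q^(s(s+1)/2) x^s Θ*(q, q^s x)` carries a neighbourhood of `μ_s` to a
neighbourhood of `-1`, where all factors of the product but `1 + 1/x` are bounded away from zero.
For `|q| ≤ 1/2` and `s ≥ 6` the automorphy factor is so large that `|Θ*(q, x)| ≥ 5 |x - μ_s|` on
the closed disk `|x - μ_s| ≤ 1/4`. Hence `μ_s` is a simple zero of `Θ*`, the only one in that
disk, and `|Θ*| ≥ 5/4` on its boundary, while `|G(q, x)| ≤ 2/|x| < 1` there.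

Rouché's theorem is obtained from the maximum principle: if `|f - g| < |f|` on a circle then
`Re (g/f) > 0` on it, and a function with positive real part on the boundary has positive real
part, hence no zeros, inside.
-/

open Filter Finset Metric Topology
open scoped ComplexConjugate

section Rouche

variable {E : Type*} [NormedAddCommGroup E] [NormedSpace ℂ E] {f g : ℂ → ℂ} {c : ℂ} {R : ℝ}

theorem re_pos_of_forall_mem_frontier_re_pos [Nontrivial E] [FiniteDimensional ℂ E]
    {U : Set E} {f : E → ℂ} (hU : Bornology.IsBounded U) (hf : DiffContOnCl ℂ f U)
    (hpos : ∀ z ∈ frontier U, 0 < (f z).re) {z : E} (hz : z ∈ U) : 0 < (f z).re := by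
  obtain ⟨w, hw, hmax⟩ := Complex.exists_mem_frontier_isMaxOn_norm hU ⟨z, hz⟩
    (Complex.differentiable_exp.comp_diffContOnCl hf.neg)
  have hle : Real.exp (-(f z).re) ≤ Real.exp (-(f w).re) := by
    simpa [Complex.norm_exp] using hmax (subset_closure hz)
  exact (hpos w hw).trans_le (neg_le_neg_iff.1 (Real.exp_le_exp.1 hle))

theorem re_div_pos_of_norm_sub_lt {a b : ℂ} (h : ‖a - b‖ < ‖a‖) : 0 < (b / a).re := by
  have ha : a ≠ 0 := norm_pos_iff.1 ((norm_nonneg _).trans_lt h)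
  have hlt : ‖1 - b / a‖ < 1 := by
    rwa [one_sub_div ha, norm_div, div_lt_one (norm_pos_iff.2 ha)]
  have hre : (1 - b / a).re < 1 := (Complex.re_le_norm _).trans_lt hlt
  rw [Complex.sub_re, Complex.one_re] at hre
  linarith

theorem re_inv_pos {a : ℂ} (h : 0 < a.re) : 0 < a⁻¹.re := by
  have ha : a ≠ 0 := by rintro rfl; simp at h
  rw [Complex.inv_re]
  exact div_pos h (Complex.normSq_pos.2 ha)

theorem exists_mem_eq_zero_of_norm_sub_lt [Nontrivial E] [FiniteDimensional ℂ E]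
    {U : Set E} {f g : E → ℂ} (hU : Bornology.IsBounded U) (hf : DiffContOnCl ℂ f U)
    (hg : DiffContOnCl ℂ g U) (hlt : ∀ z ∈ frontier U, ‖f z - g z‖ < ‖f z‖)
    {a : E} (ha : a ∈ U) (hfa : f a = 0) : ∃ z ∈ U, g z = 0 := by
  by_contra! hg0
  have hg0' : ∀ z ∈ closure U, g z ≠ 0 := by
    rw [closure_eq_self_union_frontier]
    rintro z (hz | hz) h
    · exact hg0 z hz h
    · simpa [h] using hlt z hz
  have hpos : ∀ z ∈ frontier U, 0 < (f z * (g z)⁻¹).re := fun z hz => by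
    rw [← div_eq_mul_inv, ← inv_div]
    exact re_inv_pos (re_div_pos_of_norm_sub_lt (hlt z hz))
  simpa [hfa] using
    re_pos_of_forall_mem_frontier_re_pos hU (hf.smul (hg.inv hg0')) hpos ha

theorem diffContOnCl_dslope [CompleteSpace E] {f : ℂ → E} {U : Set ℂ}
    (hf : DiffContOnCl ℂ f U) (hU : IsOpen U) (hc : c ∈ U) : DiffContOnCl ℂ (dslope f c) U := by
  have hUc : U ∈ 𝓝 c := hU.mem_nhds hc
  exact ⟨(Complex.differentiableOn_dslope hUc).2 hf.differentiableOn,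
    (continuousOn_dslope (mem_of_superset hUc subset_closure)).2
      ⟨hf.continuousOn, hf.differentiableAt hU hc⟩⟩

theorem dslope_ne_zero_of_deriv_ne_zero {𝕜 : Type*} [NontriviallyNormedField 𝕜] {f : 𝕜 → 𝕜}
    {c z : 𝕜} (hfc : f c = 0) (hf' : deriv f c ≠ 0) (hz : f z = 0 → z = c) :
    dslope f c z ≠ 0 := by
  intro h
  obtain rfl : z = c := hz (by simpa [h, hfc] using (sub_smul_dslope f c z).symm)
  exact hf' (by rwa [dslope_same] at h)

theorem sq_sub_conj_mul_ne_zero {b z : ℂ} (hb : b ∈ ball c R) (hz : z ∈ closedBall c R) :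
    (R ^ 2 - conj (b - c) * (z - c) : ℂ) ≠ 0 := by
  have hR : 0 < R := pos_of_mem_ball hb
  rw [mem_ball_iff_norm] at hb
  rw [mem_closedBall_iff_norm] at hz
  intro h
  have heq : R ^ 2 = ‖b - c‖ * ‖z - c‖ := by
    simpa [-map_sub, abs_of_pos hR] using congrArg norm (sub_eq_zero.1 h)
  have hlt : ‖b - c‖ * ‖z - c‖ < R ^ 2 :=
    calc ‖b - c‖ * ‖z - c‖ ≤ ‖b - c‖ * R := by gcongr
      _ < R * R := by gcongr
      _ = R ^ 2 := (sq R).symm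
  exact hlt.ne' heq

theorem mul_sq_sub_conj_mul_eq {b z : ℂ} (hz : ‖z - c‖ = R) :
    (z - b) * (R ^ 2 - conj (b - c) * (z - c)) = Complex.normSq (z - b) * (z - c) := by
  rw [← hz, ← Complex.conj_mul', Complex.normSq_eq_conj_mul_self]
  simp only [map_sub]
  ring

-- On the circle `R² - conj (b - c) (z - c)` is `(z - c) conj (z - b)`, so the quotient below is
-- `(g z / f z) / |z - b|²`; unlike that expression, it is holomorphic across `b` and `c`.
theorem re_dslope_mul_inv_pos {b z : ℂ} (hb : b ∈ ball c R) (hz : z ∈ sphere c R)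
    (hfc : f c = 0) (hgb : g b = 0) (hlt : ‖f z - g z‖ < ‖f z‖) :
    0 < (dslope g b z * ((R ^ 2 - conj (b - c) * (z - c)) * dslope f c z)⁻¹).re := by
  have hf : (z - c) * dslope f c z = f z := by simpa [hfc] using sub_smul_dslope f c z
  have hg : (z - b) * dslope g b z = g z := by simpa [hgb] using sub_smul_dslope g b z
  have hfz : f z ≠ 0 := norm_pos_iff.1 ((norm_nonneg _).trans_lt hlt)
  have hzb : z - b ≠ 0 := sub_ne_zero.2 (by rintro rfl; simp [hgb] at hlt)
  have hfz' : dslope f c z ≠ 0 := right_ne_zero_of_mul (hf ▸ hfz)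
  have hB := sq_sub_conj_mul_ne_zero hb (sphere_subset_closedBall hz)
  have hN : (Complex.normSq (z - b) : ℂ) ≠ 0 := by simpa using hzb
  have heq : dslope g b z * ((R ^ 2 - conj (b - c) * (z - c)) * dslope f c z)⁻¹ =
      ((Complex.normSq (z - b))⁻¹ : ℝ) * (g z / f z) := by
    rw [Complex.ofReal_inv, ← div_eq_mul_inv, inv_mul_eq_div, div_div,
      div_eq_div_iff (mul_ne_zero hB hfz') (mul_ne_zero hfz hN), ← hf, ← hg]
    linear_combination
      -dslope g b z * dslope f c z * mul_sq_sub_conj_mul_eq (b := b) (mem_sphere_iff_norm.1 hz)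
  rw [heq, Complex.re_ofReal_mul]
  exact mul_pos (inv_pos.2 (Complex.normSq_pos.2 hzb)) (re_div_pos_of_norm_sub_lt hlt)

theorem dslope_ne_zero_of_norm_sub_lt (hf : DiffContOnCl ℂ f (ball c R))
    (hg : DiffContOnCl ℂ g (ball c R)) (hfc : f c = 0) (hf' : deriv f c ≠ 0)
    (hf0 : ∀ z ∈ ball c R, f z = 0 → z = c) (hlt : ∀ z ∈ sphere c R, ‖f z - g z‖ < ‖f z‖)
    {b : ℂ} (hb : b ∈ ball c R) (hgb : g b = 0) {w : ℂ} (hw : w ∈ ball c R) :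
    dslope g b w ≠ 0 := by
  have hR : 0 < R := pos_of_mem_ball hb
  have hf0' : ∀ z ∈ closedBall c R, f z = 0 → z = c := by
    rw [← ball_union_sphere]
    rintro z (hz | hz) h
    · exact hf0 z hz h
    · exact absurd h (norm_pos_iff.1 ((norm_nonneg _).trans_lt (hlt z hz)))
  have hB : Differentiable ℂ fun z : ℂ => (R ^ 2 - conj (b - c) * (z - c) : ℂ) := by fun_prop
  have hψ : DiffContOnCl ℂ (fun z => dslope g b z *
      ((R ^ 2 - conj (b - c) * (z - c)) * dslope f c z)⁻¹) (ball c R) := by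
    refine (diffContOnCl_dslope hg isOpen_ball hb).smul (DiffContOnCl.inv
      (hB.diffContOnCl.smul (diffContOnCl_dslope hf isOpen_ball (mem_ball_self hR))) ?_)
    rw [closure_ball c hR.ne']
    exact fun z hz => mul_ne_zero (sq_sub_conj_mul_ne_zero hb hz)
      (dslope_ne_zero_of_deriv_ne_zero hfc hf' (hf0' z hz))
  have hpos := re_pos_of_forall_mem_frontier_re_pos isBounded_ball hψ
    (by rw [frontier_ball c hR.ne']; exact fun z hz =>
      re_dslope_mul_inv_pos hb hz hfc hgb (hlt z hz)) hw
  exact fun h => hpos.ne' (by simp [h])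

theorem exists_unique_simple_zero_of_norm_sub_lt (hR : 0 < R) (hf : DiffContOnCl ℂ f (ball c R))
    (hg : DiffContOnCl ℂ g (ball c R)) (hfc : f c = 0) (hf' : deriv f c ≠ 0)
    (hf0 : ∀ z ∈ ball c R, f z = 0 → z = c)
    (hlt : ∀ z ∈ sphere c R, ‖f z - g z‖ < ‖f z‖) :
    ∃ z ∈ ball c R, g z = 0 ∧ deriv g z ≠ 0 ∧ ∀ w ∈ ball c R, g w = 0 → w = z := by
  obtain ⟨z, hz, hgz⟩ := exists_mem_eq_zero_of_norm_sub_lt isBounded_ball hf hg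
    (by rwa [frontier_ball c hR.ne']) (mem_ball_self hR) hfc
  have hne {w : ℂ} (hw : w ∈ ball c R) : dslope g z w ≠ 0 :=
    dslope_ne_zero_of_norm_sub_lt hf hg hfc hf' hf0 hlt hz hgz hw
  refine ⟨z, hz, hgz, by simpa using hne hz, fun w hw hgw => ?_⟩
  have hprod : (w - z) * dslope g z w = 0 := by simpa [hgw, hgz] using sub_smul_dslope g z w
  exact sub_eq_zero.1 ((mul_eq_zero.1 hprod).resolve_right (hne hw))

theorem le_norm_deriv_of_eventually_mul_norm_sub_le {𝕜 F : Type*} [NontriviallyNormedField 𝕜]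
    [NormedAddCommGroup F] [NormedSpace 𝕜 F] {f : 𝕜 → F} {c : 𝕜} {K : ℝ}
    (hf : DifferentiableAt 𝕜 f c) (h : ∀ᶠ z in 𝓝 c, K * ‖z - c‖ ≤ ‖f z - f c‖) :
    K ≤ ‖deriv f c‖ := by
  refine ge_of_tendsto hf.hasDerivAt.tendsto_slope.norm ?_
  filter_upwards [h.filter_mono nhdsWithin_le_nhds, self_mem_nhdsWithin] with z hz hzc
  have hpos : 0 < ‖z - c‖ := norm_pos_iff.2 (sub_ne_zero.2 hzc)
  rwa [slope_def_module, norm_smul, norm_inv, inv_mul_eq_div, le_div_iff₀ hpos]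

end Rouche

section QPochhammer

/-- The finite `q`-Pochhammer symbol `(a; q)_n = (1 - a)(1 - aq)⋯(1 - aq^(n-1))`. -/
def qPochhammer {R : Type*} [CommRing R] (a q : R) (n : ℕ) : R :=
  ∏ i ∈ range n, (1 - a * q ^ i)

/-- The infinite `q`-Pochhammer symbol `(a; q)_∞`, meaningful for `‖q‖ < 1`. -/
noncomputable def qPochhammerInf {𝕜 : Type*} [NormedField 𝕜] (a q : 𝕜) : 𝕜 :=
  ∏' n : ℕ, (1 - a * q ^ n)

theorem qPochhammer_self_succ {R : Type*} [CommRing R] (q : R) (n : ℕ) :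
    qPochhammer q q (n + 1) = qPochhammer q q n * (1 - q ^ (n + 1)) := by
  rw [qPochhammer, prod_range_succ, ← pow_succ', qPochhammer]

theorem one_sub_sum_norm_le_norm_prod {ι 𝕜 : Type*} [NormedField 𝕜] (s : Finset ι) (u : ι → 𝕜) :
    1 - ∑ i ∈ s, ‖u i‖ ≤ ‖∏ i ∈ s, (1 - u i)‖ := by
  classical
  induction s using Finset.induction_on with
  | empty => simp
  | insert a s ha ih =>
    rw [sum_insert ha, prod_insert ha, norm_mul]
    have hs : 0 ≤ ∑ i ∈ s, ‖u i‖ := sum_nonneg fun i _ => norm_nonneg _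
    have hua : 1 - ‖u a‖ ≤ ‖1 - u a‖ := by simpa using norm_sub_norm_le 1 (u a)
    rcases le_total 1 ‖u a‖ with h | h
    · exact le_trans (by linarith) (by positivity : 0 ≤ ‖1 - u a‖ * ‖∏ i ∈ s, (1 - u i)‖)
    · calc 1 - (‖u a‖ + ∑ i ∈ s, ‖u i‖) ≤ (1 - ‖u a‖) * (1 - ∑ i ∈ s, ‖u i‖) := by
            linarith [mul_nonneg (norm_nonneg (u a)) hs]
        _ ≤ (1 - ‖u a‖) * ‖∏ i ∈ s, (1 - u i)‖ := by gcongr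
        _ ≤ ‖1 - u a‖ * ‖∏ i ∈ s, (1 - u i)‖ := by gcongr

variable {𝕜 : Type*} [NormedField 𝕜] {q : 𝕜}

theorem summable_norm_neg_mul_pow (a : 𝕜) (hq : ‖q‖ < 1) :
    Summable fun n : ℕ => ‖-(a * q ^ n)‖ := by
  simpa using (summable_geometric_of_lt_one (norm_nonneg q) hq).mul_left ‖a‖

theorem one_sub_pow_succ_ne_zero (hq : ‖q‖ < 1) (n : ℕ) : 1 - q ^ (n + 1) ≠ 0 := by
  refine sub_ne_zero.2 fun h => (pow_lt_one₀ (norm_nonneg q) hq n.succ_ne_zero).ne ?_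
  rw [← norm_pow, ← h, norm_one]

theorem qPochhammer_self_ne_zero (hq : ‖q‖ < 1) (n : ℕ) : qPochhammer q q n ≠ 0 := by
  refine prod_ne_zero_iff.2 fun i _ => ?_
  rw [← pow_succ']
  exact one_sub_pow_succ_ne_zero hq i

variable [CompleteSpace 𝕜]

theorem multipliable_one_sub_mul_pow (a : 𝕜) (hq : ‖q‖ < 1) :
    Multipliable fun n : ℕ => 1 - a * q ^ n := by
  simpa only [sub_eq_add_neg] using
    multipliable_one_add_of_summable (summable_norm_neg_mul_pow a hq)

theorem tendsto_qPochhammer (a : 𝕜) (hq : ‖q‖ < 1) :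
    Tendsto (qPochhammer a q) atTop (𝓝 (qPochhammerInf a q)) :=
  (multipliable_one_sub_mul_pow a hq).tendsto_prod_tprod_nat

theorem qPochhammerInf_self_ne_zero (hq : ‖q‖ < 1) : qPochhammerInf q q ≠ 0 := by
  simp only [qPochhammerInf, sub_eq_add_neg]
  refine tprod_one_add_ne_zero_of_summable (fun n => ?_) (summable_norm_neg_mul_pow q hq)
  rw [← sub_eq_add_neg, ← pow_succ']
  exact one_sub_pow_succ_ne_zero hq n

theorem qPochhammerInf_eq_one_sub_mul (a : 𝕜) (hq : ‖q‖ < 1) :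
    qPochhammerInf a q = (1 - a) * qPochhammerInf (a * q) q := by
  have hshift : (fun n => 1 - a * q ^ (n + 1)) = fun n => 1 - a * q * q ^ n := by
    funext n
    ring
  have hmul := multipliable_one_sub_mul_pow (a * q) hq
  rw [← hshift] at hmul
  rw [qPochhammerInf, tprod_eq_zero_mul' (f := fun n => 1 - a * q ^ n) hmul, hshift, pow_zero,
    mul_one, qPochhammerInf]

theorem one_sub_div_le_norm_qPochhammerInf (a : 𝕜) (hq : ‖q‖ < 1) :
    1 - ‖a‖ / (1 - ‖q‖) ≤ ‖qPochhammerInf a q‖ := by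
  refine ge_of_tendsto' (tendsto_qPochhammer a hq).norm fun n => ?_
  refine le_trans ?_ (one_sub_sum_norm_le_norm_prod (range n) fun i => a * q ^ i)
  simp only [norm_mul, norm_pow, ← mul_sum]
  have hgeom : ∑ i ∈ range n, ‖q‖ ^ i ≤ (1 - ‖q‖)⁻¹ := by
    rw [← tsum_geometric_of_lt_one (norm_nonneg q) hq]
    exact (summable_geometric_of_lt_one (norm_nonneg q) hq).sum_le_tsum _ fun i _ => by positivity
  rw [div_eq_mul_inv]
  gcongr

theorem sq_one_sub_le_norm_qPochhammerInf {a : 𝕜} (hq : ‖q‖ ≤ 1 / 2) (ha : ‖a‖ ≤ 1) :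
    (1 - ‖a‖) ^ 2 ≤ ‖qPochhammerInf a q‖ := by
  have hfac : 1 - ‖a‖ ≤ ‖1 - a‖ := by simpa using norm_sub_norm_le 1 a
  have htail : ‖a * q‖ / (1 - ‖q‖) ≤ ‖a‖ := by
    rw [norm_mul, div_le_iff₀ (by linarith)]
    gcongr
    linarith
  rw [qPochhammerInf_eq_one_sub_mul a (by linarith), norm_mul, sq]
  have hbound := one_sub_div_le_norm_qPochhammerInf (a * q) (q := q) (by linarith)
  exact mul_le_mul hfac (by linarith) (by linarith) (norm_nonneg _)

end QPochhammer

section GaussBinom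

/-- The Gaussian binomial coefficient, as a polynomial expression in `q` defined by the
`q`-Pascal recursion. -/
def gaussBinom {R : Type*} [CommSemiring R] (q : R) : ℕ → ℕ → R
  | _, 0 => 1
  | 0, _ + 1 => 0
  | n + 1, k + 1 => q ^ (k + 1) * gaussBinom q n (k + 1) + gaussBinom q n k

theorem gaussBinom_eq_zero_of_lt {R : Type*} [CommSemiring R] (q : R) :
    ∀ {n k : ℕ}, n < k → gaussBinom q n k = 0
  | 0, _ + 1, _ => by rw [gaussBinom]
  | n + 1, k + 1, h => by
    rw [gaussBinom, gaussBinom_eq_zero_of_lt q (by lia : n < k + 1),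
      gaussBinom_eq_zero_of_lt q (by lia : n < k), mul_zero, add_zero]

theorem gaussBinom_mul_qPochhammer {R : Type*} [CommRing R] (q : R) :
    ∀ k l : ℕ, gaussBinom q (k + l) k * (qPochhammer q q k * qPochhammer q q l) =
      qPochhammer q q (k + l)
  | 0, l => by simp [gaussBinom, qPochhammer]
  | k + 1, 0 => by
    have ih := gaussBinom_mul_qPochhammer q k 0
    rw [add_zero] at ih ⊢
    rw [gaussBinom, gaussBinom_eq_zero_of_lt q k.lt_succ_self, qPochhammer_self_succ]
    linear_combination (1 - q ^ (k + 1)) * ih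
  | k + 1, l + 1 => by
    have ih₁ := gaussBinom_mul_qPochhammer q (k + 1) l
    have ih₂ := gaussBinom_mul_qPochhammer q k (l + 1)
    rw [show k + (l + 1) = k + 1 + l by ring] at ih₂
    rw [← add_assoc, gaussBinom, qPochhammer_self_succ q (k + 1 + l)]
    rw [qPochhammer_self_succ q k] at *
    rw [qPochhammer_self_succ q l] at *
    linear_combination q ^ (k + 1) * (1 - q ^ (l + 1)) * ih₁ + (1 - q ^ (k + 1)) * ih₂

theorem succ_mul_succ_succ_div_two (n : ℕ) :
    (n + 1) * (n + 1 + 1) / 2 = n * (n + 1) / 2 + (n + 1) := by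
  rw [show (n + 1) * (n + 1 + 1) = n * (n + 1) + (n + 1) * 2 by ring,
    Nat.add_mul_div_right _ _ two_pos]

theorem prod_one_add_mul_pow_eq_sum_gaussBinom {R : Type*} [CommSemiring R] (q z : R) (n : ℕ) :
    ∏ i ∈ range n, (1 + z * q ^ (i + 1)) =
      ∑ k ∈ range (n + 1), gaussBinom q n k * (q ^ (k * (k + 1) / 2) * z ^ k) := by
  induction n generalizing z with
  | zero => simp [gaussBinom]
  | succ n ih =>
    set c : ℕ → R := fun k => q ^ (k * (k + 1) / 2) * z ^ k with hc
    have hc_succ (k : ℕ) : c (k + 1) = q ^ k * c k * (z * q) := by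
      simp only [hc, succ_mul_succ_succ_div_two]
      ring
    have htail : ∏ i ∈ range n, (1 + z * q ^ (i + 1 + 1)) =
        ∑ k ∈ range (n + 1), gaussBinom q n k * (q ^ k * c k) := by
      simp_rw [pow_succ' q (_ + 1), ← mul_assoc z q, ih (z * q), hc]
      exact sum_congr rfl fun k _ => by ring
    have hextend : ∑ k ∈ range (n + 1), gaussBinom q n k * (q ^ k * c k) =
        ∑ k ∈ range (n + 1), gaussBinom q n (k + 1) * (q ^ (k + 1) * c (k + 1)) + 1 := by
      have hlast : gaussBinom q n (n + 1) = 0 := gaussBinom_eq_zero_of_lt q n.lt_succ_self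
      have := sum_range_succ' (fun k => gaussBinom q n k * (q ^ k * c k)) (n + 1)
      simpa [sum_range_succ _ (n + 1), hlast, gaussBinom, hc] using this
    rw [prod_range_succ', htail, zero_add, pow_one, mul_add, mul_one]
    nth_rewrite 1 [hextend]
    rw [sum_mul, add_right_comm, ← sum_add_distrib, sum_range_succ' _ (n + 1)]
    congr 1
    · refine sum_congr rfl fun k _ => ?_
      change _ = gaussBinom q (n + 1) (k + 1) * c (k + 1)
      rw [gaussBinom, hc_succ]
      ring
    · simp [gaussBinom]

end GaussBinom

section Theta

theorem mul_add_one_ediv_two_add (m k : ℤ) :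
    (m + k) * (m + k + 1) / 2 = m * (m + 1) / 2 + k * (k + 1) / 2 + m * k := by
  have h (n : ℤ) : 2 * (n * (n + 1) / 2) = n * (n + 1) :=
    Int.two_mul_ediv_two_of_even (Int.even_mul_succ_self n)
  linarith [h (m + k), h m, h k]

/-- The general term `q^(k(k+1)/2) x^k` of the bilateral theta series. -/
def thetaTerm {K : Type*} [Field K] (q x : K) (k : ℤ) : K :=
  q ^ (k * (k + 1) / 2) * x ^ k

/-- The two-sided theta series `Θ*(q, x) = ∑_{k ∈ ℤ} q^(k(k+1)/2) x^k`. -/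
noncomputable def bilateralTheta {𝕜 : Type*} [NormedField 𝕜] (q x : 𝕜) : 𝕜 :=
  ∑' k : ℤ, thetaTerm q x k

/-- The partial theta function `θ(q, x) = ∑_{j ≥ 0} q^(j(j+1)/2) x^j`. -/
noncomputable def partialTheta {𝕜 : Type*} [NormedField 𝕜] (q x : 𝕜) : 𝕜 :=
  ∑' j : ℕ, q ^ (j * (j + 1) / 2) * x ^ j

/-- The negative-index part `G(q, x) = ∑_{j < 0} q^(j(j+1)/2) x^j` of the bilateral theta series,
indexed by `j = -(ν + 1)`. -/
noncomputable def thetaTail {𝕜 : Type*} [NormedField 𝕜] (q x : 𝕜) : 𝕜 :=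
  ∑' ν : ℕ, q ^ (ν * (ν + 1) / 2) * x ^ (-(ν + 1 : ℤ))

theorem thetaTerm_natCast {K : Type*} [Field K] (q x : K) (n : ℕ) :
    thetaTerm q x n = q ^ (n * (n + 1) / 2) * x ^ n := by
  rw [thetaTerm, zpow_natCast, ← zpow_natCast q]
  norm_cast

theorem thetaTerm_neg_natCast_add_one {K : Type*} [Field K] (q x : K) (n : ℕ) :
    thetaTerm q x (-(n + 1 : ℤ)) = q ^ (n * (n + 1) / 2) * x ^ (-(n + 1 : ℤ)) := by
  rw [thetaTerm, ← zpow_natCast q]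
  congr 2
  push_cast
  congr 1
  ring

theorem pow_mul_zpow_neg_add_one {K : Type*} [Field K] (q x : K) (n : ℕ) :
    q ^ (n * (n + 1) / 2) * x ^ (-(n + 1 : ℤ)) =
      x⁻¹ * (q ^ (n * (n + 1) / 2) * x⁻¹ ^ n) := by
  rw [zpow_neg, ← inv_zpow]
  norm_cast
  ring

theorem thetaTerm_add {K : Type*} [Field K] {q x : K} (hq : q ≠ 0) (hx : x ≠ 0) (m k : ℤ) :
    thetaTerm q x (m + k) = thetaTerm q x m * thetaTerm q (q ^ m * x) k := by
  simp only [thetaTerm, mul_add_one_ediv_two_add, zpow_add₀ hq, zpow_add₀ hx, mul_zpow, zpow_mul]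
  ring

theorem prod_mul_pow_succ_eq_thetaTerm {K : Type*} [Field K] (q x : K) (n : ℕ) :
    ∏ i ∈ range n, (x * q ^ (i + 1)) = thetaTerm q x n := by
  rw [thetaTerm_natCast]
  induction n with
  | zero => simp
  | succ n ih =>
    rw [prod_range_succ, ih, succ_mul_succ_succ_div_two]
    ring

section NormedField

variable {𝕜 : Type*} [NormedField 𝕜] {q x : 𝕜}

theorem bilateralTheta_eq_thetaTerm_mul (hq : q ≠ 0) (hx : x ≠ 0) (m : ℤ) :
    bilateralTheta q x = thetaTerm q x m * bilateralTheta q (q ^ m * x) := by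
  rw [bilateralTheta, ← (Equiv.addLeft m).tsum_eq, bilateralTheta, ← tsum_mul_left]
  exact tsum_congr fun k => thetaTerm_add hq hx m k

theorem thetaTail_eq_inv_mul_partialTheta (q x : 𝕜) :
    thetaTail q x = x⁻¹ * partialTheta q x⁻¹ := by
  simp only [thetaTail, partialTheta, pow_mul_zpow_neg_add_one, tsum_mul_left]

theorem summable_norm_partialTheta (hq : ‖q‖ < 1) (x : 𝕜) :
    Summable fun n : ℕ => ‖q ^ (n * (n + 1) / 2) * x ^ n‖ := by
  have hratio : Tendsto (fun n : ℕ => ‖q‖ ^ (n + 1) * ‖x‖) atTop (𝓝 0) := by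
    simpa using ((tendsto_pow_atTop_nhds_zero_of_lt_one (norm_nonneg q) hq).comp
      (tendsto_add_atTop_nat 1)).mul_const ‖x‖
  refine summable_of_ratio_norm_eventually_le one_half_lt_one ?_
  filter_upwards [hratio.eventually_le_const one_half_pos] with n hn
  rw [norm_norm, norm_norm, succ_mul_succ_succ_div_two]
  calc ‖q ^ (n * (n + 1) / 2 + (n + 1)) * x ^ (n + 1)‖
      = ‖q‖ ^ (n + 1) * ‖x‖ * ‖q ^ (n * (n + 1) / 2) * x ^ n‖ := by
        simp only [norm_mul, norm_pow]
        ring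
    _ ≤ 1 / 2 * ‖q ^ (n * (n + 1) / 2) * x ^ n‖ := by gcongr

theorem summable_norm_thetaTerm (hq : ‖q‖ < 1) (x : 𝕜) :
    Summable fun k : ℤ => ‖thetaTerm q x k‖ := by
  refine Summable.of_nat_of_neg_add_one ?_ ?_
  · simpa only [thetaTerm_natCast] using summable_norm_partialTheta hq x
  · simpa only [thetaTerm_neg_natCast_add_one, pow_mul_zpow_neg_add_one, norm_mul x⁻¹] using
      (summable_norm_partialTheta hq x⁻¹).mul_left ‖x⁻¹‖

theorem norm_partialTheta_le (hq : ‖q‖ < 1) (hx : ‖x‖ ≤ 1) :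
    ‖partialTheta q x‖ ≤ (1 - ‖q‖)⁻¹ := by
  have hterm (n : ℕ) : ‖q ^ (n * (n + 1) / 2) * x ^ n‖ ≤ ‖q‖ ^ n := by
    rw [norm_mul, norm_pow, norm_pow]
    have hn : n ≤ n * (n + 1) / 2 := by
      rw [Nat.le_div_iff_mul_le two_pos]
      linarith [Nat.le_mul_self n]
    calc ‖q‖ ^ (n * (n + 1) / 2) * ‖x‖ ^ n ≤ ‖q‖ ^ n * 1 := mul_le_mul
          (pow_le_pow_of_le_one (norm_nonneg q) hq.le hn) (pow_le_one₀ (norm_nonneg x) hx)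
          (by positivity) (by positivity)
      _ = ‖q‖ ^ n := mul_one _
  rw [← tsum_geometric_of_lt_one (norm_nonneg q) hq]
  exact tsum_of_norm_bounded (summable_geometric_of_lt_one (norm_nonneg q) hq).hasSum hterm

theorem norm_thetaTail_le (hq : ‖q‖ < 1) (hx : 1 ≤ ‖x‖) :
    ‖thetaTail q x‖ ≤ ‖x‖⁻¹ * (1 - ‖q‖)⁻¹ := by
  rw [thetaTail_eq_inv_mul_partialTheta, norm_mul, norm_inv]
  gcongr
  exact norm_partialTheta_le hq (by simpa using inv_le_one_of_one_le₀ hx)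

theorem bilateralTheta_eq_partialTheta_add_thetaTail [CompleteSpace 𝕜] (hq : ‖q‖ < 1) (x : 𝕜) :
    bilateralTheta q x = partialTheta q x + thetaTail q x := by
  have hsum := (summable_norm_thetaTerm hq x).of_norm
  rw [bilateralTheta, tsum_of_nat_of_neg_add_one
    (hsum.comp_injective Nat.cast_injective) (hsum.comp_injective fun m n h => by simpa using h)]
  simp only [thetaTerm_natCast, thetaTerm_neg_natCast_add_one, partialTheta, thetaTail]

end NormedField

theorem differentiable_partialTheta {q : ℂ} (hq : ‖q‖ < 1) : Differentiable ℂ (partialTheta q) := by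
  intro x
  have hd : DifferentiableOn ℂ (partialTheta q) (ball 0 (‖x‖ + 1)) := by
    refine Complex.differentiableOn_tsum_of_summable_norm
      (summable_norm_partialTheta hq ((‖x‖ + 1 : ℝ) : ℂ)) (fun n => by fun_prop)
      isOpen_ball fun n w hw => ?_
    have hw' : ‖w‖ ≤ ‖((‖x‖ + 1 : ℝ) : ℂ)‖ := by
      rw [Complex.norm_real]
      exact (mem_ball_zero_iff.1 hw).le.trans (le_abs_self _)
    rw [norm_mul, norm_mul, norm_pow w, norm_pow (_ : ℂ) n]
    gcongr
  exact hd.differentiableAt (isOpen_ball.mem_nhds (by simp))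

theorem differentiableAt_bilateralTheta {q x : ℂ} (hq : ‖q‖ < 1) (hx : x ≠ 0) :
    DifferentiableAt ℂ (bilateralTheta q) x := by
  have heq : bilateralTheta q = fun x => partialTheta q x + x⁻¹ * partialTheta q x⁻¹ := by
    funext x
    rw [bilateralTheta_eq_partialTheta_add_thetaTail hq, thetaTail_eq_inv_mul_partialTheta]
  have hinv : DifferentiableAt ℂ (fun x : ℂ => x⁻¹) x := differentiableAt_inv hx
  rw [heq]
  exact (differentiable_partialTheta hq x).add
    (hinv.mul ((differentiable_partialTheta hq x⁻¹).comp x hinv))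

end Theta

section TripleProduct

theorem prod_mul_prod_eq_sum_gaussBinom_mul_thetaTerm {K : Type*} [Field K] {q x : K}
    (hq : q ≠ 0) (hx : x ≠ 0) (N : ℕ) :
    (∏ i ∈ range N, (1 + x * q ^ (i + 1))) * ∏ i ∈ range N, (1 + x⁻¹ * q ^ i) =
      ∑ j ∈ range (2 * N + 1), gaussBinom q (2 * N) j * thetaTerm q x (j - N) := by
  -- Apply the `q`-binomial theorem to `z = q^(-N) x` and move the summation index by `N`.
  obtain ⟨z, rfl⟩ : ∃ z, x = q ^ N * z := ⟨(q ^ N)⁻¹ * x, by field_simp⟩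
  have hz : z ≠ 0 := right_ne_zero_of_mul hx
  have hupper : ∏ i ∈ range N, (1 + z * q ^ (N + i + 1)) =
      ∏ i ∈ range N, (1 + q ^ N * z * q ^ (i + 1)) :=
    prod_congr rfl fun i _ => by ring
  have hlower : ∏ i ∈ range N, (1 + z * q ^ (i + 1)) =
      thetaTerm q z N * ∏ i ∈ range N, (1 + (q ^ N * z)⁻¹ * q ^ i) := by
    rw [← prod_mul_pow_succ_eq_thetaTerm, ← prod_range_reflect (fun i => 1 + (q ^ N * z)⁻¹ * q ^ i),
      ← prod_mul_distrib]
    refine prod_congr rfl fun i hi => ?_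
    have hN : q ^ N = q ^ (i + 1) * q ^ (N - 1 - i) := by
      rw [← pow_add]
      congr 1
      have := mem_range.1 hi
      lia
    rw [hN]
    field_simp
    ring
  have hθ : thetaTerm q z N ≠ 0 := mul_ne_zero (zpow_ne_zero _ hq) (zpow_ne_zero _ hz)
  refine mul_left_cancel₀ hθ ?_
  calc thetaTerm q z N * ((∏ i ∈ range N, (1 + q ^ N * z * q ^ (i + 1))) *
        ∏ i ∈ range N, (1 + (q ^ N * z)⁻¹ * q ^ i))
      = ∏ i ∈ range (2 * N), (1 + z * q ^ (i + 1)) := by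
        rw [two_mul, prod_range_add, hlower, hupper]
        ring
    _ = ∑ j ∈ range (2 * N + 1), gaussBinom q (2 * N) j * thetaTerm q z j := by
        simp only [prod_one_add_mul_pow_eq_sum_gaussBinom, thetaTerm_natCast]
    _ = _ := by
        rw [mul_sum]
        refine sum_congr rfl fun j _ => ?_
        rw [← add_sub_cancel (N : ℤ) j, thetaTerm_add hq hz, zpow_natCast, add_sub_cancel]
        ring

theorem sum_range_eq_tsum_gaussBinom {K : Type*} [Field K] [TopologicalSpace K] (q x : K) (N : ℕ) :
    ∑ j ∈ range (2 * N + 1), gaussBinom q (2 * N) j * thetaTerm q x (j - N) =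
      ∑' k : ℤ, if -(N : ℤ) ≤ k then
        gaussBinom q (2 * N) (N + k).toNat * thetaTerm q x k else 0 := by
  rw [tsum_eq_sum (s := Icc (-N : ℤ) N) fun k hk => ?_]
  · refine sum_nbij' (fun j : ℕ => (j : ℤ) - N) (fun k : ℤ => (N + k).toNat)
      ?_ ?_ ?_ ?_ ?_
    · simp only [mem_range, mem_Icc]
      lia
    · simp only [mem_range, mem_Icc]
      lia
    · simp only [mem_range]
      lia
    · simp only [mem_Icc]
      lia
    · intro j _
      rw [if_pos (by lia), add_sub_cancel, Int.toNat_natCast]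
  · split_ifs with h
    · rw [gaussBinom_eq_zero_of_lt, zero_mul]
      rw [mem_Icc] at hk
      lia
    · rfl

variable {𝕜 : Type*} [NormedField 𝕜] {q x : 𝕜}

theorem gaussBinom_eq_div (hq : ‖q‖ < 1) (k l : ℕ) :
    gaussBinom q (k + l) k = qPochhammer q q (k + l) / (qPochhammer q q k * qPochhammer q q l) :=
  eq_div_of_mul_eq (mul_ne_zero (qPochhammer_self_ne_zero hq k) (qPochhammer_self_ne_zero hq l))
    (gaussBinom_mul_qPochhammer q k l)

variable [CompleteSpace 𝕜]

theorem exists_norm_gaussBinom_le (hq : ‖q‖ < 1) : ∃ C, ∀ n k, ‖gaussBinom q n k‖ ≤ C := by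
  have hlim := tendsto_qPochhammer q hq
  obtain ⟨A, hA⟩ := hlim.norm.bddAbove_range
  obtain ⟨B, hB⟩ := (hlim.inv₀ (qPochhammerInf_self_ne_zero hq)).norm.bddAbove_range
  replace hA (n : ℕ) : ‖qPochhammer q q n‖ ≤ A := hA (Set.mem_range_self n)
  replace hB (n : ℕ) : ‖(qPochhammer q q n)⁻¹‖ ≤ B := hB (Set.mem_range_self n)
  have hA0 : 0 ≤ A := (norm_nonneg _).trans (hA 0)
  have hB0 : 0 ≤ B := (norm_nonneg _).trans (hB 0)
  refine ⟨A * (B * B), fun n k => ?_⟩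
  rcases lt_or_ge n k with hnk | hkn
  · rw [gaussBinom_eq_zero_of_lt q hnk, norm_zero]
    positivity
  · obtain ⟨l, rfl⟩ := Nat.exists_eq_add_of_le hkn
    rw [gaussBinom_eq_div hq, div_eq_mul_inv, mul_inv, norm_mul, norm_mul]
    gcongr
    exacts [hA _, hB _, hB _]

theorem tendsto_gaussBinom (hq : ‖q‖ < 1) :
    Tendsto (fun p : ℕ × ℕ => gaussBinom q (p.1 + p.2) p.1) (atTop ×ˢ atTop)
      (𝓝 (qPochhammerInf q q)⁻¹) := by
  have hlim := tendsto_qPochhammer q hq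
  have h0 := qPochhammerInf_self_ne_zero hq
  simp only [gaussBinom_eq_div hq]
  have hadd : Tendsto (fun p : ℕ × ℕ => p.1 + p.2) (atTop ×ˢ atTop) atTop :=
    tendsto_fst.atTop_add_atTop tendsto_snd
  have hdiv := (hlim.comp hadd).div ((hlim.comp tendsto_fst).mul (hlim.comp tendsto_snd))
    (mul_ne_zero h0 h0)
  rwa [div_mul_cancel_left₀ h0] at hdiv

theorem tendsto_gaussBinom_two_mul (hq : ‖q‖ < 1) (k : ℤ) :
    Tendsto (fun N : ℕ => gaussBinom q (2 * N) (N + k).toNat) atTop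
      (𝓝 (qPochhammerInf q q)⁻¹) := by
  have htop (m : ℤ) : Tendsto (fun N : ℕ => (N + m).toNat) atTop atTop :=
    tendsto_atTop_mono (fun N => by lia : ∀ N : ℕ, N - m.natAbs ≤ (N + m).toNat)
      (tendsto_sub_atTop_nat m.natAbs)
  refine ((tendsto_gaussBinom hq).comp ((htop k).prodMk (htop (-k)))).congr' ?_
  filter_upwards [eventually_ge_atTop k.natAbs] with N hN
  simp only [Function.comp_apply]
  congr 1
  lia

theorem jacobi_triple_product (hq0 : q ≠ 0) (hq : ‖q‖ < 1) (hx : x ≠ 0) :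
    bilateralTheta q x =
      qPochhammerInf q q * qPochhammerInf (-x * q) q * qPochhammerInf (-x⁻¹) q := by
  obtain ⟨C, hC⟩ := exists_norm_gaussBinom_le hq
  have hC0 : 0 ≤ C := (norm_nonneg _).trans (hC 0 0)
  have hsum : Tendsto (fun N : ℕ =>
      ∑ j ∈ range (2 * N + 1), gaussBinom q (2 * N) j * thetaTerm q x (j - N)) atTop
      (𝓝 (∑' k : ℤ, (qPochhammerInf q q)⁻¹ * thetaTerm q x k)) := by
    simp only [sum_range_eq_tsum_gaussBinom]
    refine tendsto_tsum_of_dominated_convergence ((summable_norm_thetaTerm hq x).mul_left C)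
      (fun k => ?_) (Eventually.of_forall fun N k => ?_)
    · refine ((tendsto_gaussBinom_two_mul hq k).mul_const _).congr' ?_
      filter_upwards [eventually_ge_atTop k.natAbs] with N hN
      rw [if_pos (by lia)]
    · split_ifs
      · rw [norm_mul]
        gcongr
        exact hC _ _
      · rw [norm_zero]
        positivity
  have hprod : Tendsto (fun N : ℕ =>
      ∑ j ∈ range (2 * N + 1), gaussBinom q (2 * N) j * thetaTerm q x (j - N)) atTop
      (𝓝 (qPochhammerInf (-x * q) q * qPochhammerInf (-x⁻¹) q)) := by
    refine ((tendsto_qPochhammer (-x * q) hq).mul (tendsto_qPochhammer (-x⁻¹) hq)).congr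
      fun N => ?_
    rw [← prod_mul_prod_eq_sum_gaussBinom_mul_thetaTerm hq0 hx]
    simp only [qPochhammer, neg_mul, sub_neg_eq_add, pow_succ', mul_assoc]
  have heq := tendsto_nhds_unique hsum hprod
  rw [tsum_mul_left, inv_mul_eq_iff_eq_mul₀ (qPochhammerInf_self_ne_zero hq)] at heq
  rw [bilateralTheta, heq, mul_assoc]

end TripleProduct

section ThetaZero

variable {𝕜 : Type*} [NormedField 𝕜] {q x y : 𝕜} {s : ℕ}

theorem three_quarters_le_norm_pow (hy : ‖y - 1‖ ≤ (1 / 2) ^ s / 4) : 3 / 4 ≤ ‖y‖ ^ s := by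
  have hs : (s : ℝ) * (1 / 2) ^ s ≤ 1 := by
    rw [one_div_pow, mul_one_div]
    exact div_le_one_of_le₀ (mod_cast s.lt_two_pow_self.le) (by positivity)
  have hpow : (1 / 2 : ℝ) ^ s ≤ 1 := pow_le_one₀ (by norm_num) (by norm_num)
  have hy' : 1 - ‖y - 1‖ ≤ ‖y‖ := by
    have := norm_sub_norm_le 1 y
    rw [norm_one, norm_sub_rev] at this
    linarith
  calc (3 / 4 : ℝ) ≤ 1 + s * (-((1 / 2) ^ s / 4)) := by linarith
    _ ≤ (1 + -((1 / 2) ^ s / 4)) ^ s := one_add_mul_le_pow (by linarith) s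
    _ ≤ ‖y‖ ^ s := by
      gcongr <;> linarith

-- The exponent `r + 9` is `s(s - 3)/2`.
theorem exists_sq_eq_triangle_add (hs : 6 ≤ s) : ∃ r, s * s = s * (s + 1) / 2 + s + (r + 9) := by
  obtain ⟨r, hr⟩ := Nat.exists_eq_add_of_le (m := s * (s + 1) / 2 + s + 9) (n := s * s) (by
    have := Nat.div_mul_le_self (s * (s + 1)) 2
    nlinarith)
  exact ⟨r, by rw [hr]; ring⟩

theorem le_norm_thetaTerm_mul_pow (hq : ‖q‖ ≤ 1 / 2) (hs : 6 ≤ s)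
    (hx : ‖-(q ^ s * x) - 1‖ ≤ (1 / 2) ^ s / 4) : 384 ≤ ‖thetaTerm q x s‖ * ‖q‖ ^ s := by
  obtain ⟨r, hr⟩ := exists_sq_eq_triangle_add hs
  have hpow : ‖q‖ ^ (r + 9) ≤ (1 / 2) ^ 9 :=
    calc ‖q‖ ^ (r + 9) ≤ ‖q‖ ^ 9 := pow_le_pow_of_le_one (norm_nonneg q) (by linarith) (by lia)
      _ ≤ (1 / 2) ^ 9 := by gcongr
  have hmain : 3 / 4 ≤ ‖thetaTerm q x s‖ * ‖q‖ ^ s * (1 / 2) ^ 9 :=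
    calc 3 / 4 ≤ ‖-(q ^ s * x)‖ ^ s := three_quarters_le_norm_pow hx
      _ = ‖thetaTerm q x s‖ * ‖q‖ ^ s * ‖q‖ ^ (r + 9) := by
        rw [norm_neg, ← norm_pow, mul_pow, ← pow_mul, hr, thetaTerm_natCast]
        simp only [norm_mul, norm_pow, pow_add]
        ring
      _ ≤ ‖thetaTerm q x s‖ * ‖q‖ ^ s * (1 / 2) ^ 9 := by gcongr
  linarith

theorem two_lt_norm_of_mem_closedBall (hq0 : q ≠ 0) (hq : ‖q‖ ≤ 1 / 2) (hs : 6 ≤ s)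
    (hx : x ∈ closedBall (-q ^ (-(s : ℤ))) (1 / 4)) : 2 < ‖x‖ := by
  rw [mem_closedBall_iff_norm'] at hx
  have hpow : ‖q‖ ^ s ≤ (1 / 2) ^ 6 :=
    calc ‖q‖ ^ s ≤ ‖q‖ ^ 6 := pow_le_pow_of_le_one (norm_nonneg q) (by linarith) hs
      _ ≤ (1 / 2) ^ 6 := by gcongr
  have hcentre : 64 ≤ ‖-q ^ (-(s : ℤ))‖ := by
    rw [norm_neg, norm_zpow, zpow_neg, zpow_natCast,
      le_inv_comm₀ (by norm_num) (pow_pos (norm_pos_iff.2 hq0) s)]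
    linarith
  linarith [norm_sub_norm_le (-q ^ (-(s : ℤ))) x]

theorem norm_thetaTail_lt_one (hq : ‖q‖ ≤ 1 / 2) (hx : 2 < ‖x‖) : ‖thetaTail q x‖ < 1 :=
  calc ‖thetaTail q x‖ ≤ ‖x‖⁻¹ * (1 - ‖q‖)⁻¹ := norm_thetaTail_le (by linarith) (by linarith)
    _ ≤ ‖x‖⁻¹ * (1 - 1 / 2)⁻¹ := by gcongr
    _ = 2 / ‖x‖ := by ring
    _ < 1 := (div_lt_one (by linarith)).2 hx

theorem neg_pow_mul_sub_one (hq : q ≠ 0) (x : 𝕜) :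
    -(q ^ s * x) - 1 = -q ^ s * (x - -q ^ (-(s : ℤ))) := by
  rw [zpow_neg, zpow_natCast]
  field_simp
  ring

variable [CompleteSpace 𝕜]

theorem bilateralTheta_neg_zpow_eq_zero (hq0 : q ≠ 0) (hq : ‖q‖ < 1) (m : ℤ) :
    bilateralTheta q (-q ^ (-m)) = 0 := by
  have hone : bilateralTheta q (-1) = 0 := by
    rw [jacobi_triple_product hq0 hq (by simp), inv_neg_one, neg_neg,
      qPochhammerInf_eq_one_sub_mul 1 hq, sub_self, zero_mul, mul_zero]
  rw [bilateralTheta_eq_thetaTerm_mul hq0 (neg_ne_zero.2 (zpow_ne_zero _ hq0)) m, mul_neg,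
    ← zpow_add₀ hq0, add_neg_cancel, zpow_zero, hone, mul_zero]

theorem le_norm_bilateralTheta_neg (hq0 : q ≠ 0) (hq : ‖q‖ ≤ 1 / 2) (hy : y ≠ 0)
    (hyq : ‖y * q‖ ≤ 1) (hyq' : ‖y⁻¹ * q‖ ≤ 1) :
    (1 - ‖q‖) ^ 2 * (1 - ‖y * q‖) ^ 2 * (‖1 - y⁻¹‖ * (1 - ‖y⁻¹ * q‖) ^ 2) ≤
      ‖bilateralTheta q (-y)‖ := by
  have hq1 : ‖q‖ < 1 := by linarith
  rw [jacobi_triple_product hq0 hq1 (neg_ne_zero.2 hy), neg_neg, inv_neg, neg_neg,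
    qPochhammerInf_eq_one_sub_mul y⁻¹ hq1, norm_mul _ ((1 - y⁻¹) * _), norm_mul (_ : 𝕜)
    (qPochhammerInf _ _), norm_mul (1 - y⁻¹)]
  have hself := sq_one_sub_le_norm_qPochhammerInf hq hq1.le
  have hmul := sq_one_sub_le_norm_qPochhammerInf hq hyq
  have hinv := sq_one_sub_le_norm_qPochhammerInf hq hyq'
  gcongr

-- For `|q| = 1/2` the product in `le_norm_bilateralTheta_neg` is `|y - 1| / 64` to first order.
theorem norm_sub_one_div_le_norm_bilateralTheta_neg (hq0 : q ≠ 0) (hq : ‖q‖ ≤ 1 / 2)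
    (hy : ‖y - 1‖ ≤ 1 / 256) : ‖y - 1‖ / 66 ≤ ‖bilateralTheta q (-y)‖ := by
  have hy_lower : 255 / 256 ≤ ‖y‖ := by
    have := norm_sub_norm_le 1 y
    rw [norm_one, norm_sub_rev] at this
    linarith
  have hy_upper : ‖y‖ ≤ 257 / 256 := by
    have := norm_sub_norm_le y 1
    rw [norm_one] at this
    linarith
  have hy0 : y ≠ 0 := norm_pos_iff.1 (by linarith)
  have hyq : ‖y * q‖ ≤ 257 / 512 := by
    rw [norm_mul]
    exact (mul_le_mul hy_upper hq (norm_nonneg q) (by norm_num)).trans (by norm_num)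
  have hyq' : ‖y⁻¹ * q‖ ≤ 128 / 255 := by
    rw [norm_mul, norm_inv, inv_mul_le_iff₀ (by linarith)]
    linarith
  have hfac : 256 / 257 * ‖y - 1‖ ≤ ‖1 - y⁻¹‖ := by
    rw [show 1 - y⁻¹ = (y - 1) / y by field_simp, norm_div, le_div_iff₀ (by linarith)]
    calc 256 / 257 * ‖y - 1‖ * ‖y‖ ≤ 256 / 257 * ‖y - 1‖ * (257 / 256) := by gcongr
      _ = ‖y - 1‖ := by ring
  calc ‖y - 1‖ / 66
      ≤ (1 - 1 / 2) ^ 2 * (1 - 257 / 512) ^ 2 * (256 / 257 * ‖y - 1‖ * (1 - 128 / 255) ^ 2) := by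
        linarith [norm_nonneg (y - 1)]
    _ ≤ (1 - ‖q‖) ^ 2 * (1 - ‖y * q‖) ^ 2 * (‖1 - y⁻¹‖ * (1 - ‖y⁻¹ * q‖) ^ 2) := by
        gcongr
    _ ≤ ‖bilateralTheta q (-y)‖ :=
        le_norm_bilateralTheta_neg hq0 hq hy0 (by linarith) (by linarith)

theorem five_mul_norm_sub_le_norm_bilateralTheta (hq0 : q ≠ 0) (hq : ‖q‖ ≤ 1 / 2) (hs : 6 ≤ s)
    (hx : x ∈ closedBall (-q ^ (-(s : ℤ))) (1 / 4)) :
    5 * ‖x - -q ^ (-(s : ℤ))‖ ≤ ‖bilateralTheta q x‖ := by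
  have hx0 : x ≠ 0 :=
    norm_pos_iff.1 (two_pos.trans (two_lt_norm_of_mem_closedBall hq0 hq hs hx))
  rw [mem_closedBall_iff_norm] at hx
  have hnorm : ‖-(q ^ s * x) - 1‖ = ‖q‖ ^ s * ‖x - -q ^ (-(s : ℤ))‖ := by
    rw [neg_pow_mul_sub_one hq0, norm_mul, norm_neg, norm_pow]
  have hnear : ‖-(q ^ s * x) - 1‖ ≤ (1 / 2) ^ s / 4 := by
    rw [hnorm, div_eq_mul_one_div]
    gcongr
  have hpow : (1 / 2 : ℝ) ^ s ≤ (1 / 2) ^ 6 :=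
    pow_le_pow_of_le_one (by norm_num) (by norm_num) hs
  have hlower := norm_sub_one_div_le_norm_bilateralTheta_neg hq0 hq
    (by linarith : ‖-(q ^ s * x) - 1‖ ≤ 1 / 256)
  have hterm := le_norm_thetaTerm_mul_pow hq hs hnear
  rw [neg_neg, hnorm] at hlower
  rw [bilateralTheta_eq_thetaTerm_mul hq0 hx0 s, zpow_natCast, norm_mul]
  calc 5 * ‖x - -q ^ (-(s : ℤ))‖ ≤ 384 * (‖x - -q ^ (-(s : ℤ))‖ / 66) := by
        linarith [norm_nonneg (x - -q ^ (-(s : ℤ)))]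
    _ ≤ ‖thetaTerm q x s‖ * ‖q‖ ^ s * (‖x - -q ^ (-(s : ℤ))‖ / 66) := by gcongr
    _ = ‖thetaTerm q x s‖ * (‖q‖ ^ s * ‖x - -q ^ (-(s : ℤ))‖ / 66) := by ring
    _ ≤ _ := by gcongr

end ThetaZero

section PartialThetaZero

variable {q x : ℂ} {s : ℕ}

theorem diffContOnCl_bilateralTheta (hq0 : q ≠ 0) (hq : ‖q‖ ≤ 1 / 2) (hs : 6 ≤ s) :
    DiffContOnCl ℂ (bilateralTheta q) (ball (-q ^ (-(s : ℤ))) (1 / 4)) := by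
  refine DifferentiableOn.diffContOnCl_ball (U := closedBall (-q ^ (-(s : ℤ))) (1 / 4))
    (fun x hx => ?_) subset_rfl
  have hx0 : x ≠ 0 :=
    norm_pos_iff.1 (two_pos.trans (two_lt_norm_of_mem_closedBall hq0 hq hs hx))
  exact (differentiableAt_bilateralTheta (by linarith) hx0).differentiableWithinAt

theorem one_lt_norm_bilateralTheta (hq0 : q ≠ 0) (hq : ‖q‖ ≤ 1 / 2) (hs : 6 ≤ s)
    (hx : x ∈ sphere (-q ^ (-(s : ℤ))) (1 / 4)) : 1 < ‖bilateralTheta q x‖ := by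
  have hlower := five_mul_norm_sub_le_norm_bilateralTheta hq0 hq hs (sphere_subset_closedBall hx)
  rw [mem_sphere_iff_norm.1 hx] at hlower
  linarith

theorem eq_of_bilateralTheta_eq_zero (hq0 : q ≠ 0) (hq : ‖q‖ ≤ 1 / 2) (hs : 6 ≤ s)
    (hx : x ∈ ball (-q ^ (-(s : ℤ))) (1 / 4)) (h : bilateralTheta q x = 0) :
    x = -q ^ (-(s : ℤ)) := by
  have hlower := five_mul_norm_sub_le_norm_bilateralTheta hq0 hq hs (ball_subset_closedBall hx)
  rw [h, norm_zero] at hlower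
  exact sub_eq_zero.1 (norm_le_zero_iff.1 (by linarith))

theorem deriv_bilateralTheta_ne_zero (hq0 : q ≠ 0) (hq : ‖q‖ ≤ 1 / 2) (hs : 6 ≤ s) :
    deriv (bilateralTheta q) (-q ^ (-(s : ℤ))) ≠ 0 := by
  have hq1 : ‖q‖ < 1 := by linarith
  have hdiff := differentiableAt_bilateralTheta hq1
    (neg_ne_zero.2 (zpow_ne_zero (-(s : ℤ)) hq0))
  refine norm_pos_iff.1 (lt_of_lt_of_le (by norm_num : (0 : ℝ) < 5)
    (le_norm_deriv_of_eventually_mul_norm_sub_le hdiff ?_))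
  filter_upwards [closedBall_mem_nhds _ (by norm_num : (0 : ℝ) < 1 / 4)] with x hx
  rw [bilateralTheta_neg_zpow_eq_zero hq0 hq1, sub_zero]
  exact five_mul_norm_sub_le_norm_bilateralTheta hq0 hq hs hx

theorem theta_unique_simple_zero_middle_q_general (q : ℂ) (hq0 : q ≠ 0) (hq : ‖q‖ ≤ 1 / 2)
    (s : ℕ) (hs : 6 ≤ s) :
    (∀ x ∈ sphere (-q ^ (-(s : ℤ))) (1 / 4), 1 < ‖bilateralTheta q x‖ ∧ ‖thetaTail q x‖ < 1) ∧
    ∃ z ∈ ball (-q ^ (-(s : ℤ))) (1 / 4), partialTheta q z = 0 ∧ deriv (partialTheta q) z ≠ 0 ∧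
      ∀ w ∈ ball (-q ^ (-(s : ℤ))) (1 / 4), partialTheta q w = 0 → w = z := by
  have hq1 : ‖q‖ < 1 := by linarith
  have hcircle : ∀ x ∈ sphere (-q ^ (-(s : ℤ))) (1 / 4),
      1 < ‖bilateralTheta q x‖ ∧ ‖thetaTail q x‖ < 1 := fun x hx =>
    ⟨one_lt_norm_bilateralTheta hq0 hq hs hx, norm_thetaTail_lt_one hq
      (two_lt_norm_of_mem_closedBall hq0 hq hs (sphere_subset_closedBall hx))⟩
  refine ⟨hcircle, exists_unique_simple_zero_of_norm_sub_lt (by norm_num)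
    (diffContOnCl_bilateralTheta hq0 hq hs) (differentiable_partialTheta hq1).diffContOnCl
    (bilateralTheta_neg_zpow_eq_zero hq0 hq1 s) (deriv_bilateralTheta_ne_zero hq0 hq hs)
    (fun x hx hx0 => eq_of_bilateralTheta_eq_zero hq0 hq hs hx hx0) fun x hx => ?_⟩
  rw [bilateralTheta_eq_partialTheta_add_thetaTail hq1, add_sub_cancel_left,
    ← bilateralTheta_eq_partialTheta_add_thetaTail hq1]
  exact (hcircle x hx).2.trans (hcircle x hx).1

theorem six_le_of_sphere_subset (hq : 1 / 5 ≤ ‖q‖)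
    (hsub : sphere (-q ^ (-(s : ℤ))) (1 / 4) ⊆ {x | 8 ^ 11 < ‖x‖}) : 6 ≤ s := by
  by_contra! hs
  have hmem : -q ^ (-(s : ℤ)) + 1 / 4 ∈ sphere (-q ^ (-(s : ℤ))) (1 / 4) := by simp
  have hlarge : 8 ^ 11 < ‖-q ^ (-(s : ℤ)) + 1 / 4‖ := hsub hmem
  have hsmall : ‖-q ^ (-(s : ℤ)) + 1 / 4‖ ≤ 5 ^ 5 + 1 / 4 :=
    calc ‖-q ^ (-(s : ℤ)) + 1 / 4‖ ≤ ‖-q ^ (-(s : ℤ))‖ + ‖(1 / 4 : ℂ)‖ := norm_add_le _ _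
      _ = ‖q‖⁻¹ ^ s + 1 / 4 := by simp
      _ ≤ 5 ^ s + 1 / 4 := by
        gcongr
        exact inv_le_of_inv_le₀ (by norm_num) (by linarith)
      _ ≤ 5 ^ 5 + 1 / 4 := by gcongr <;> [norm_num; lia]
  linarith

end PartialThetaZero

/-- For `0.2078750206 ≤ |q| ≤ 1/2`, if the circle `C(μ_s, 1/4)` lies in `{|x| > 8^11}` then
`|Θ*| > 1 > |G|` on it, and consequently `θ(q,·)` has exactly one zero, a simple one, in
the open disk `D(μ_s, 1/4)`. -/
theorem theta_unique_simple_zero_middle_q (q : ℂ)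
    (hq1 : (0.2078750206 : ℝ) ≤ ‖q‖) (hq2 : ‖q‖ ≤ 1 / 2)
    (s : ℕ) (hs : 1 ≤ s)
    (hsub : Metric.sphere (-q ^ (-(s : ℤ)) : ℂ) (1 / 4 : ℝ)
      ⊆ {x : ℂ | (8 : ℝ) ^ 11 < ‖x‖}) :
    (∀ x ∈ Metric.sphere (-q ^ (-(s : ℤ)) : ℂ) (1 / 4 : ℝ),
      1 < ‖∑' j : ℤ, q ^ (j * (j + 1) / 2) * x ^ j‖ ∧
      ‖∑' ν : ℕ, q ^ (ν * (ν + 1) / 2) * x ^ (-(ν + 1 : ℤ))‖ < 1) ∧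
    ∃ z ∈ Metric.ball (-q ^ (-(s : ℤ)) : ℂ) (1 / 4 : ℝ),
      (∑' j : ℕ, q ^ (j * (j + 1) / 2) * z ^ j = 0) ∧
      deriv (fun x : ℂ => ∑' j : ℕ, q ^ (j * (j + 1) / 2) * x ^ j) z ≠ 0 ∧
      ∀ w ∈ Metric.ball (-q ^ (-(s : ℤ)) : ℂ) (1 / 4 : ℝ),
        (∑' j : ℕ, q ^ (j * (j + 1) / 2) * w ^ j = 0) → w = z :=
  theta_unique_simple_zero_middle_q_general q (norm_pos_iff.1 (by linarith)) hq2 s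
    (six_le_of_sphere_subset (by linarith) hsub)
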